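/- Let e ∈ {0,1,2}, let r ≡ e+1 (mod 2), let U be an F-vector space of dimension r+2, H a hyperplane of U, Q a nondegenerate quadratic form on H of Witt defect e, Π a generator of Q, and let P be a hyperbolic, parabolic or elliptic avsp for (U, H, Q, Π) (according as e = 0, 1 or 2). Then every nonzero vector x ∈ H with Q(x) = 0 and x ∉ Π lies in exactly q members of P; equivalently, exactly q of the generators S ∩ H (for S ∈ P) contain x. -/

import Mathlib

open Module Submodule

section Defs

variable {F : Type*} [Field F] {V : Type*} [AddCommGroup V] [Module F V]

/-- A subspace is totally singular if the quadratic form vanishes on it. -/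
def IsTotallySingular (Q : QuadraticForm F V) (W : Submodule F V) : Prop :=
  ∀ x ∈ W, Q x = 0

/-- The Witt index: maximal dimension of a totally singular subspace. -/
noncomputable def wittIndex (Q : QuadraticForm F V) : ℕ :=
  sSup {n : ℕ | ∃ W : Submodule F V, IsTotallySingular Q W ∧ Module.finrank F ↥W = n}

/-- Nondegeneracy: the only singular vector orthogonal to everything is `0`. -/
def QuadNondeg (Q : QuadraticForm F V) : Prop :=
  ∀ v : V, Q v = 0 → (∀ x : V, QuadraticMap.polar Q v x = 0) → v = 0

/-- A generator: totally singular subspace of dimension the Witt index. -/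
def IsGenerator (Q : QuadraticForm F V) (G : Submodule F V) : Prop :=
  IsTotallySingular Q G ∧ Module.finrank F ↥G = wittIndex Q

/-- A spread of `Q`. -/
def IsSpread (Q : QuadraticForm F V) (S : Set (Submodule F V)) : Prop :=
  (∀ G ∈ S, IsGenerator Q G) ∧
  (∀ G ∈ S, ∀ G' ∈ S, G ≠ G' → G ⊓ G' = ⊥) ∧
  (∀ v : V, Q v = 0 → ∃ G ∈ S, v ∈ G)

/-- The perp of a vector with respect to the polar form of `Q`. -/
def vecPerp (Q : QuadraticForm F V) (u : V) : Submodule F V :=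
  LinearMap.ker (QuadraticMap.polarBilin Q u)

/-- The perp of a subspace with respect to the polar form of `Q`. -/
def subPerp (Q : QuadraticForm F V) (G : Submodule F V) : Submodule F V :=
  ⨅ g ∈ G, vecPerp Q g

/-- Hyperbolic (e = 0), parabolic (e = 1) or elliptic (e = 2) affine vector space
partition for `(U, H, Q, Pgen)`. -/
def IsAvsp [Fintype F] (e r : ℕ) {U : Type*} [AddCommGroup U] [Module F U]
    (H : Submodule F U) (Q : QuadraticForm F ↥H) (Pgen : Submodule F ↥H)
    (P : Set (Submodule F U)) : Prop :=
  P.ncard = Fintype.card F ^ ((r + e + 1) / 2) ∧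
  (∀ S ∈ P, Module.finrank F ↥S = (r + 3 - e) / 2 ∧ ¬ S ≤ H) ∧
  (∀ L : Submodule F U, Module.finrank F ↥L = 1 → ¬ L ≤ H → ∃! S, S ∈ P ∧ L ≤ S) ∧
  (∀ S ∈ P, IsGenerator Q (S.comap H.subtype) ∧ S.comap H.subtype ⊓ Pgen = ⊥) ∧
  (∀ S ∈ P, ∀ T ∈ P, S ≠ T → S.comap H.subtype ≠ T.comap H.subtype) ∧
  (∀ S ∈ P, ∀ T ∈ P, S ≠ T → Module.finrank F ↥(S ⊓ T) ≤ 1) ∧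
  (∀ S ∈ P, ∀ T ∈ P, S ≠ T →
    Module.finrank F ↥(S.comap H.subtype ⊓ T.comap H.subtype) = 1 →
      QuadNondeg (Q.comp ((S ⊔ T).comap H.subtype).subtype) ∧
      Module.finrank F ↥((S ⊔ T).comap H.subtype) =
        2 * wittIndex (Q.comp ((S ⊔ T).comap H.subtype).subtype))

end Defs

/-!
Let `x` be a singular vector outside `Π`, and extend the functional `B(x, ·)` from `H = ker g` to a
functional `f` on `U`. A member `S` containing `x` meets `H` in a totally singular subspace, so
`f = c g` on `S` for some scalar `c`. Members `S ≠ T` with the same `c` would put `x` in the radical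
of `Q` on `(S + T) ∩ H`, which is nondegenerate; hence at most `q` members contain `x`.

On the other hand, `q` times the number of singular vectors outside `Π` is `|H| - |Π^⊥|`, which is
at most `|H / Π| (|Π| - 1)`. The right side counts the incident pairs `(x, S)`, since each of the
`|H / Π|` members contains `|Π| - 1` of these vectors. So the bound `q` is attained at every `x`.
-/

section DoubleCounting

theorem ncard_setOf_rel_eq_of_ncard_mul_le {α β : Type*} {r : α → β → Prop} {s : Set α} {t : Set β}
    (hs : s.Finite) (ht : t.Finite) {m n : ℕ} (hbelow : ∀ b ∈ t, m ≤ {a ∈ s | r a b}.ncard)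
    (habove : ∀ a ∈ s, {b ∈ t | r a b}.ncard ≤ n) (hcard : s.ncard * n ≤ t.ncard * m)
    {a : α} (ha : a ∈ s) : {b ∈ t | r a b}.ncard = n := by
  classical
  lift s to Finset α using hs
  lift t to Finset β using ht
  simp only [Finset.mem_coe, ← Finset.coe_bipartiteAbove, ← Finset.coe_bipartiteBelow,
    Set.ncard_coe_finset] at *
  refine (Finset.sum_eq_sum_iff_of_le habove).1
    ((Finset.sum_le_sum habove).antisymm ?_) a ha
  calc ∑ _a ∈ s, n ≤ t.card * m := by simpa using hcard
    _ ≤ ∑ b ∈ t, (s.bipartiteBelow r b).card := by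
      simpa using Finset.card_nsmul_le_sum t _ m hbelow
    _ = ∑ a ∈ s, (t.bipartiteAbove r a).card :=
      (Finset.sum_card_bipartiteAbove_eq_sum_card_bipartiteBelow r).symm

end DoubleCounting

section Pencil

variable {F : Type*} [Field F] {U : Type*} [AddCommGroup U] [Module F U]

theorem exists_le_ker_sub_smul {f g : Dual F U} {S : Submodule F U}
    (h : S ⊓ LinearMap.ker g ≤ LinearMap.ker f) : ∃ c : F, S ≤ LinearMap.ker (f - c • g) := by
  have hmem : f.domRestrict S ∈ span F (Set.range fun _ : Unit => g.domRestrict S) :=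
    mem_span_of_iInf_ker_le_ker fun s hs => h ⟨s.2, by simpa using hs⟩
  rw [Set.range_const, mem_span_singleton] at hmem
  obtain ⟨c, hc⟩ := hmem
  refine ⟨c, fun s hs => ?_⟩
  simpa [sub_eq_zero] using (LinearMap.congr_fun hc ⟨s, hs⟩).symm

theorem exists_dual_ker_eq {H : Submodule F U} (hH : finrank F (U ⧸ H) = 1) :
    ∃ g : Dual F U, LinearMap.ker g = H := by
  obtain ⟨φ⟩ := nonempty_linearEquiv_of_finrank_eq_one hH
  exact ⟨φ.symm.toLinearMap ∘ₗ H.mkQ, by simp⟩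

theorem ncard_le_card_of_comap_le_ker [Finite F] {H : Submodule F U}
    (hH : finrank F (U ⧸ H) = 1) {f : Dual F H} {P : Set (Submodule F U)}
    (hker : ∀ S ∈ P, S.comap H.subtype ≤ LinearMap.ker f)
    (hsup : P.Pairwise fun S T => ¬ (S ⊔ T).comap H.subtype ≤ LinearMap.ker f) :
    P.ncard ≤ Nat.card F := by
  obtain ⟨g, hg⟩ := exists_dual_ker_eq hH
  obtain ⟨f', hf'⟩ := LinearMap.exists_extend f
  have hf'H : ∀ y : H, f' y = f y := LinearMap.congr_fun hf'
  have hslope : ∀ S ∈ P, ∃ c : F, S ≤ LinearMap.ker (f' - c • g) := fun S hS =>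
    exists_le_ker_sub_smul fun s hs => by
      have hsH : s ∈ H := hg ▸ hs.2
      exact (hf'H ⟨s, hsH⟩).trans (hker S hS hs.1)
  choose! c hc using hslope
  have hinj : Set.InjOn c P := by
    intro S hS T hT hcST
    by_contra hne
    refine hsup hS hT hne fun y hy => ?_
    have hy' : (y : U) ∈ LinearMap.ker (f' - c S • g) := sup_le (hc S hS) (hcST ▸ hc T hT) hy
    have hgy : g y = 0 := by simpa [← hg] using y.2
    simpa [hgy, hf'H] using hy'
  simpa using Set.ncard_le_ncard_of_injOn c (fun _ _ => Set.mem_univ _) hinj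

end Pencil

section SingularVectors

variable {F : Type*} [Field F] {V : Type*} [AddCommGroup V] [Module F V]
  {Q : QuadraticForm F V} {G : Submodule F V}

theorem mem_subPerp {v : V} : v ∈ subPerp Q G ↔ ∀ g ∈ G, QuadraticMap.polar Q g v = 0 := by
  simp [subPerp, vecPerp]

/-- The linear map `v ↦ B(v, ·)|_G` to the dual of `G`, where `B` is the polar form of `Q`. -/
def polarRestrict (Q : QuadraticForm F V) (G : Submodule F V) : V →ₗ[F] Dual F G :=
  (QuadraticMap.polarBilin Q).domRestrict₂ G

@[simp]
theorem polarRestrict_apply (v : V) (g : G) :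
    polarRestrict Q G v g = QuadraticMap.polar Q v g :=
  rfl

theorem ker_polarRestrict (Q : QuadraticForm F V) (G : Submodule F V) :
    LinearMap.ker (polarRestrict Q G) = subPerp Q G := by
  ext v
  simp [mem_subPerp, LinearMap.ext_iff, QuadraticMap.polar_comm Q v]

theorem finrank_quotient_le_finrank_subPerp [FiniteDimensional F V] (Q : QuadraticForm F V)
    (G : Submodule F V) : finrank F (V ⧸ G) ≤ finrank F (subPerp Q G) := by
  have hrank := (polarRestrict Q G).finrank_range_add_finrank_ker
  have hrange := (LinearMap.range (polarRestrict Q G)).finrank_le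
  have hquot := G.finrank_quotient_add_finrank
  rw [Subspace.dual_finrank_eq] at hrange
  rw [ker_polarRestrict] at hrank
  omega

namespace IsTotallySingular

theorem polar_eq_zero (hG : IsTotallySingular Q G) {x y : V} (hx : x ∈ G) (hy : y ∈ G) :
    QuadraticMap.polar Q x y = 0 := by
  simp [QuadraticMap.polar, hG _ (G.add_mem hx hy), hG _ hx, hG _ hy]

theorem le_vecPerp (hG : IsTotallySingular Q G) {x : V} (hx : x ∈ G) : G ≤ vecPerp Q x :=
  fun _ hy => hG.polar_eq_zero hx hy

theorem le_subPerp (hG : IsTotallySingular Q G) : G ≤ subPerp Q G :=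
  le_iInf₂ fun _ hg => hG.le_vecPerp hg

theorem polarRestrict_add_coe (hG : IsTotallySingular Q G) (v : V) (g : G) :
    polarRestrict Q G (v + g) = polarRestrict Q G v := by
  have hg : (g : V) ∈ LinearMap.ker (polarRestrict Q G) :=
    ker_polarRestrict Q G ▸ hG.le_subPerp g.2
  rw [map_add, LinearMap.mem_ker.1 hg, add_zero]

theorem map_add_smul (hG : IsTotallySingular Q G) (v : V) (a : F) (g : G) :
    Q (v + a • (g : V)) = Q v + a * polarRestrict Q G v g := by
  simp [QuadraticMap.map_add Q v, QuadraticMap.map_smul, hG g g.2, QuadraticMap.polar_smul_right]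

theorem sup_span_singleton (hG : IsTotallySingular Q G) {v : V} (hv : Q v = 0)
    (hvG : v ∈ subPerp Q G) : IsTotallySingular Q (G ⊔ span F {v}) := by
  intro y hy
  obtain ⟨g, hg, z, hz, rfl⟩ := mem_sup.1 hy
  obtain ⟨a, rfl⟩ := mem_span_singleton.1 hz
  simp [QuadraticMap.map_add, QuadraticMap.map_smul, QuadraticMap.polar_smul_right,
    hG g hg, hv, mem_subPerp.1 hvG g hg]

theorem finrank_le_wittIndex [FiniteDimensional F V] (hG : IsTotallySingular Q G) :
    finrank F G ≤ wittIndex Q :=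
  le_csSup ⟨finrank F V, by rintro _ ⟨W, -, rfl⟩; exact W.finrank_le⟩ ⟨G, hG, rfl⟩

/-- Choose for each nonzero functional `f` on `G` some `γ f ∈ G` with `f (γ f) = 1`. Along the line
`z + a • γ`, where `γ` belongs to the functional `B(z, ·)|_G`, that functional is constant and
`Q` takes the value `Q z + a`, so each such line off `subPerp Q G` carries one singular vector. -/
theorem ncard_singular_notMem_subPerp_mul_card (hG : IsTotallySingular Q G) :
    {v : V | Q v = 0 ∧ v ∉ subPerp Q G}.ncard * Nat.card F = {v : V | v ∉ subPerp Q G}.ncard := by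
  have hexists : ∀ f : Dual F G, f ≠ 0 → ∃ g : G, f g = 1 := fun f hf =>
    LinearMap.surjective hf 1
  choose! γ hγ using hexists
  let φ := polarRestrict Q G
  have hφ : ∀ v, v ∉ subPerp Q G ↔ φ v ≠ 0 := fun v => by
    rw [← ker_polarRestrict, LinearMap.mem_ker]
  have hφ_add : ∀ v (a : F) (g : G), φ (v + a • (g : V)) = φ v := fun v a g =>
    hG.polarRestrict_add_coe v (a • g)
  have hQ_add : ∀ v (a : F), φ v ≠ 0 → Q (v + a • (γ (φ v) : V)) = Q v + a := fun v a hv => by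
    rw [hG.map_add_smul, hγ _ hv, mul_one]
  let shift : V × F → V := fun p => p.1 + p.2 • (γ (φ p.1) : V)
  let unshift : V → V × F := fun v => (v + (-Q v) • (γ (φ v) : V), Q v)
  have hbij : Set.BijOn shift ({v : V | Q v = 0 ∧ v ∉ subPerp Q G} ×ˢ Set.univ)
      {v : V | v ∉ subPerp Q G} := by
    refine Set.InvOn.bijOn (f' := unshift) ⟨?_, ?_⟩ ?_ ?_
    · rintro ⟨z, a⟩ ⟨⟨hz, hzG⟩, -⟩
      simp [shift, unshift, hφ_add, hQ_add z a ((hφ z).1 hzG), hz]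
    · intro v _
      simp only [shift, unshift, hφ_add]
      rw [neg_smul, neg_add_cancel_right]
    · rintro ⟨z, a⟩ ⟨⟨-, hzG⟩, -⟩
      simpa [shift, hφ, hφ_add] using hzG
    · intro v hv
      have hv0 : φ v ≠ 0 := (hφ v).1 hv
      have hQ : Q (v + (-Q v) • (γ (φ v) : V)) = 0 := by rw [hQ_add v _ hv0, add_neg_cancel]
      exact ⟨⟨hQ, (hφ _).2 (by rwa [hφ_add])⟩, trivial⟩
  rw [← hbij.image_eq, hbij.injOn.ncard_image, Set.ncard_prod, Set.ncard_univ]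

theorem ncard_singular_notMem_inter {W : Submodule F V} (hW : IsTotallySingular Q W)
    (hWG : Disjoint W G) : ({v : V | Q v = 0 ∧ v ∉ G} ∩ W).ncard = Nat.card W - 1 := by
  have hset : {v : V | Q v = 0 ∧ v ∉ G} ∩ W = (W : Set V) \ {0} := by
    ext v
    refine ⟨fun ⟨⟨_, hvG⟩, hvW⟩ => ⟨hvW, ?_⟩, fun ⟨hvW, hv0⟩ => ⟨⟨hW v hvW, ?_⟩, hvW⟩⟩
    · rintro rfl
      exact hvG G.zero_mem
    · exact fun hvG => hv0 (disjoint_def.1 hWG v hvW hvG)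
  rw [hset, Set.ncard_sdiff_singleton_of_mem W.zero_mem, ← Nat.card_coe_set_eq]
  rfl

end IsTotallySingular

namespace IsGenerator

theorem mem_of_mem_subPerp [FiniteDimensional F V] (hG : IsGenerator Q G) {v : V}
    (hv : Q v = 0) (hvG : v ∈ subPerp Q G) : v ∈ G := by
  have heq : G = G ⊔ span F {v} := eq_of_le_of_finrank_le le_sup_left
    ((hG.1.sup_span_singleton hv hvG).finrank_le_wittIndex.trans hG.2.ge)
  exact heq ▸ mem_sup_right (mem_span_singleton_self v)

theorem card_eq [Finite F] [FiniteDimensional F V] (hG : IsGenerator Q G) :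
    Nat.card G = Nat.card F ^ wittIndex Q := by
  rw [Module.natCard_eq_pow_finrank (K := F), hG.2]

theorem ncard_singular_notMem_mul_card_le [Finite F] [FiniteDimensional F V]
    (hG : IsGenerator Q G) :
    {v : V | Q v = 0 ∧ v ∉ G}.ncard * Nat.card F ≤ Nat.card (V ⧸ G) * (Nat.card G - 1) := by
  have : Finite V := Module.finite_of_finite F
  have hset : {v : V | Q v = 0 ∧ v ∉ G} = {v : V | Q v = 0 ∧ v ∉ subPerp Q G} := by
    ext v
    exact and_congr_right fun hv => 
      not_congr ⟨fun h => hG.1.le_subPerp h, hG.mem_of_mem_subPerp hv⟩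
  have hperp : Nat.card (V ⧸ G) ≤ Nat.card (subPerp Q G) := by
    rw [Module.natCard_eq_pow_finrank (K := F) (V := V ⧸ G),
      Module.natCard_eq_pow_finrank (K := F) (V := subPerp Q G)]
    exact Nat.pow_le_pow_right Nat.card_pos (finrank_quotient_le_finrank_subPerp Q G)
  have hcompl := Set.ncard_add_ncard_compl (subPerp Q G : Set V)
  calc {v : V | Q v = 0 ∧ v ∉ G}.ncard * Nat.card F = (subPerp Q G : Set V)ᶜ.ncard := by
        rw [hset, hG.1.ncard_singular_notMem_subPerp_mul_card]
        rfl
    _ = Nat.card V - Nat.card (subPerp Q G) := Nat.eq_sub_of_add_eq' hcompl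
    _ ≤ Nat.card V - Nat.card (V ⧸ G) := Nat.sub_le_sub_left hperp _
    _ = Nat.card (V ⧸ G) * (Nat.card G - 1) := by
        rw [Submodule.card_eq_card_quotient_mul_card G, Nat.mul_sub, mul_one, mul_comm]

end IsGenerator

theorem QuadNondeg.not_le_vecPerp {W : Submodule F V} (hW : QuadNondeg (Q.comp W.subtype))
    {x : V} (hxW : x ∈ W) (hxQ : Q x = 0) (hx0 : x ≠ 0) : ¬ W ≤ vecPerp Q x := fun h =>
  hx0 (congrArg Subtype.val (hW ⟨x, hxW⟩ hxQ fun y => h y.2))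

end SingularVectors

section Avsp

variable {F : Type*} [Field F] {U : Type*} [AddCommGroup U] [Module F U]
  {H : Submodule F U} {Q : QuadraticForm F H} {G : Submodule F H} {P : Set (Submodule F U)}

theorem avsp_point_in_exactly_q_members_general [Finite F] [FiniteDimensional F U]
    (hH : finrank F (U ⧸ H) = 1) (hG : IsGenerator Q G) (hcard : Nat.card (H ⧸ G) ≤ P.ncard)
    (hgen : ∀ S ∈ P, IsGenerator Q (S.comap H.subtype))
    (hdisj : ∀ S ∈ P, Disjoint (S.comap H.subtype) G)
    (hrad : P.Pairwise fun S T => ∀ x ∈ (S ⊓ T).comap H.subtype, x ≠ 0 →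
      ¬ (S ⊔ T).comap H.subtype ≤ vecPerp Q x)
    {x : H} (hxQ : Q x = 0) (hxG : x ∉ G) :
    {S : Submodule F U | S ∈ P ∧ (x : U) ∈ S}.ncard = Nat.card F := by
  have : Finite U := Module.finite_of_finite F
  refine ncard_setOf_rel_eq_of_ncard_mul_le (r := fun (y : H) (S : Submodule F U) => (y : U) ∈ S)
    (s := {y | Q y = 0 ∧ y ∉ G}) (m := Nat.card G - 1) (Set.toFinite _) (Set.toFinite _)
    (fun S hS => ?_) (fun y hy => ?_) ?_ ⟨hxQ, hxG⟩
  · rw [hG.card_eq, ← (hgen S hS).card_eq]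
    exact ((hgen S hS).1.ncard_singular_notMem_inter (hdisj S hS)).ge
  · have hy0 : y ≠ 0 := fun h => hy.2 (h ▸ G.zero_mem)
    exact ncard_le_card_of_comap_le_ker hH (f := QuadraticMap.polarBilin Q y)
      (fun S hS => (hgen S hS.1).1.le_vecPerp hS.2)
      fun S hS T hT hne => hrad hS.1 hT.1 hne y ⟨hS.2, hT.2⟩ hy0
  · exact hG.ncard_singular_notMem_mul_card_le.trans (Nat.mul_le_mul_right _ hcard)

namespace IsAvsp

variable [Fintype F] {e r : ℕ}

theorem isGenerator_comap (hP : IsAvsp e r H Q G P) {S : Submodule F U} (hS : S ∈ P) :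
    IsGenerator Q (S.comap H.subtype) :=
  (hP.2.2.2.1 S hS).1

theorem disjoint_comap (hP : IsAvsp e r H Q G P) {S : Submodule F U} (hS : S ∈ P) :
    Disjoint (S.comap H.subtype) G :=
  disjoint_iff.2 (hP.2.2.2.1 S hS).2

theorem card_quotient_eq_ncard [FiniteDimensional F H] (hP : IsAvsp e r H Q G P)
    (hG : IsGenerator Q G) (hH : finrank F H = r + 1) (hdef : finrank F H = 2 * wittIndex Q + e) :
    Nat.card (H ⧸ G) = P.ncard := by
  have hquot := G.finrank_quotient_add_finrank
  rw [hG.2] at hquot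
  rw [hP.1, Module.natCard_eq_pow_finrank (K := F), Nat.card_eq_fintype_card]
  congr 1
  omega

theorem not_sup_le_vecPerp [FiniteDimensional F U] (hP : IsAvsp e r H Q G P) :
    P.Pairwise fun S T => ∀ x ∈ (S ⊓ T).comap H.subtype, x ≠ 0 →
      ¬ (S ⊔ T).comap H.subtype ≤ vecPerp Q x := by
  obtain ⟨-, -, -, -, -, hmeet, hnondeg⟩ := id hP
  intro S hS T hT hne x hx hx0
  have hone : finrank F ↥((S ⊓ T).comap H.subtype) = 1 := by
    refine le_antisymm ?_ (one_le_finrank_iff.2 ((Submodule.ne_bot_iff _).2 ⟨x, hx, hx0⟩))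
    refine le_trans ?_ (hmeet S hS T hT hne)
    rw [← finrank_map_subtype_eq, map_comap_subtype]
    exact finrank_mono inf_le_right
  exact (hnondeg S hS T hT hne hone).1.not_le_vecPerp (mem_sup_left (S := S) hx.1)
    ((hP.isGenerator_comap hS).1 x hx.1) hx0

end IsAvsp

end Avsp

theorem avsp_point_in_exactly_q_members {F : Type*} [Field F] [Fintype F] (e r : ℕ)
    (he : e = 0 ∨ e = 1 ∨ e = 2) (hmod : r % 2 = (e + 1) % 2)
    (U : Type*) [AddCommGroup U] [Module F U] [FiniteDimensional F U]
    (hU : Module.finrank F U = r + 2)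
    (H : Submodule F U) (hH : Module.finrank F ↥H = r + 1)
    (Q : QuadraticForm F ↥H) (hQnd : QuadNondeg Q)
    (hdef : Module.finrank F ↥H = 2 * wittIndex Q + e)
    (Pgen : Submodule F ↥H) (hPgen : IsGenerator Q Pgen)
    (P : Set (Submodule F U)) (hP : IsAvsp e r H Q Pgen P)
    (x : ↥H) (hx0 : x ≠ 0) (hxQ : Q x = 0) (hxPgen : x ∉ Pgen) :
    {S : Submodule F U | S ∈ P ∧ (x : U) ∈ S}.ncard = Fintype.card F := by
  exact Nat.card_eq_fintype_card (α := F) ▸ avsp_point_in_exactly_q_members_general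
    (by rw [H.finrank_quotient, hU, hH]; omega) hPgen
    (hP.card_quotient_eq_ncard hPgen hH hdef).le (fun _ => hP.isGenerator_comap)
    (fun _ => hP.disjoint_comap) hP.not_sup_le_vecPerp hxQ hxPgen
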